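/- arXiv:2202.00136 — 2 statements merged into one kernel-verified Lean document; each statement's English description precedes it below -/
import Mathlib

section
/- There exist positive integers n1, n2 with n1 + n2 = 10 and a successful two-stage coding algorithm for the Z-channel of total length 10 correcting 1 asymmetric error whose message set has size 177. -/
/-!
Assign to every first-stage word `y` a second-stage code `C y` correcting one asymmetric error, and
let a message be a pair `(y, c)` with `c ∈ C y`. The sender transmits `y`. If it arrives intact, `c`
follows. If it arrives as some `y' ⋖ y`, the only error has been spent, so the second stage is
noiseless, and the sender announces the message by a free point of `C y'`, which no received
version of a codeword of `C y'` can be. This works as soon as the free points of each `C y'` are at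
least as numerous as the messages `(y, c)` with `y' ⋖ y`. If `C y` depends only on the weight of
`y`, say `C y = C w` for `w = wt y`, then the condition is
`(n1 - w) * #(C (w + 1)) ≤ freeCount (C w)`, and there are `∑ w, n1.choose w * #(C w)` messages.
For `n1 = 6` and `n2 = 4`, codes of sizes `2, 2, 2, 3, 3, 4, 4` for `w = 0, …, 6` give 177.
-/

/-- Hamming weight of a binary word: the number of ones. -/
def wt {n : ℕ} (a : Fin n → Bool) : ℕ :=
  (Finset.univ.filter (fun i => a i = true)).card

/-- N(a,b) = number of positions where a is 0 and b is 1. -/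
def NN {n : ℕ} (a b : Fin n → Bool) : ℕ :=
  (Finset.univ.filter (fun i => a i = false ∧ b i = true)).card

/-- The Z-distance d_Z(a,b) = max(N(a,b), N(b,a)). -/
def dZ {n : ℕ} (a b : Fin n → Bool) : ℕ := max (NN a b) (NN b a)

/-- A code correcting one asymmetric error: d_Z(a,b) ≥ 2 for distinct codewords. -/
def IsZCode {n : ℕ} (C : Finset (Fin n → Bool)) : Prop :=
  ∀ a ∈ C, ∀ b ∈ C, a ≠ b → 2 ≤ dZ a b

/-- The output ball B_1(a): words obtainable from a by at most one asymmetric (1→0) error. -/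
def ball {n : ℕ} (a : Fin n → Bool) : Finset (Fin n → Bool) :=
  Finset.univ.filter (fun y => (∀ i, y i ≤ a i) ∧ wt a - wt y ≤ 1)

/-- The number of free points of a code: words lying in no ball B_1(a), a ∈ C. -/
def freeCount {n : ℕ} (C : Finset (Fin n → Bool)) : ℕ :=
  (Finset.univ.filter (fun y => ∀ a ∈ C, y ∉ ball a)).card

/-- A two-stage coding algorithm (c1, c2, dec) of lengths n1, n2 with message set `Fin M`
is successful if it correctly decodes under at most one asymmetric error in total. -/
def TwoStageSuccess (n1 n2 M : ℕ)
    (c1 : Fin M → (Fin n1 → Bool))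
    (c2 : Fin M → (Fin n1 → Bool) → (Fin n2 → Bool))
    (dec : (Fin n1 → Bool) → (Fin n2 → Bool) → Fin M) : Prop :=
  ∀ (m : Fin M) (y1 : Fin n1 → Bool) (y2 : Fin n2 → Bool),
    (∀ i, y1 i ≤ c1 m i) → (∀ i, y2 i ≤ c2 m y1 i) →
    (wt (c1 m) - wt y1) + (wt (c2 m y1) - wt y2) ≤ 1 →
    dec y1 y2 = m

open Finset

section Words

variable {n : ℕ} {a b y z : Fin n → Bool}

/-- The set of positions of the ones of a binary word. Words carry the componentwise order, so `≤`
means "obtainable by asymmetric errors" and `⋖` "obtainable by exactly one". -/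
def ones : (Fin n → Bool) ≃o Finset (Fin n) where
  toFun a := univ.filter (a · = true)
  invFun s i := decide (i ∈ s)
  left_inv a := by simp
  right_inv s := by simp
  map_rel_iff' := by simp [subset_iff, Pi.le_def, Bool.le_iff_imp]

lemma card_ones (a : Fin n → Bool) : #(ones a) = wt a := rfl

lemma card_ones_sdiff_ones (a b : Fin n → Bool) : #(ones b \ ones a) = NN a b := by
  congr 1
  ext i
  simp [ones, and_comm]

lemma wt_mono : Monotone (wt : (Fin n → Bool) → ℕ) :=
  card_mono.comp ones.monotone

lemma wt_le (a : Fin n → Bool) : wt a ≤ n :=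
  card_finset_fin_le (ones a)

lemma eq_of_le_of_wt_le (h : y ≤ z) (hwt : wt z ≤ wt y) : y = z :=
  ones.injective (eq_of_subset_of_card_le (ones.monotone h) hwt)

lemma covBy_iff_le_and_wt_eq : y ⋖ z ↔ y ≤ z ∧ wt z = wt y + 1 := by
  rw [← apply_covBy_apply_iff ones, covBy_iff_card_sdiff_eq_one, ones.le_iff_le]
  refine and_congr_right fun h => ?_
  have hwt := wt_mono h
  rw [card_sdiff_of_subset (ones.monotone h), card_ones, card_ones]
  omega

open scoped Classical in
lemma card_filter_covBy (y : Fin n → Bool) : #{z | y ⋖ z} = n - wt y := by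
  have himage : ({z | y ⋖ z} : Finset (Fin n → Bool)).map ones.toEquiv.toEmbedding =
      (ones y)ᶜ.image (insert · (ones y)) := by
    ext s
    obtain ⟨z, rfl⟩ := ones.surjective s
    simp [← covBy_iff_exists_insert]
  rw [← card_map, himage, card_image_of_injOn (insert_inj_on' _), card_compl, Fintype.card_fin,
    card_ones]

lemma sum_apply_wt (n : ℕ) (f : ℕ → ℕ) :
    ∑ y : Fin n → Bool, f (wt y) = ∑ w ∈ range (n + 1), n.choose w * f w := by
  calc ∑ y : Fin n → Bool, f (wt y) = ∑ s ∈ (univ : Finset (Fin n)).powerset, f #s := by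
        rw [powerset_univ]
        exact Fintype.sum_equiv ones.toEquiv _ _ fun _ => rfl
    _ = ∑ w ∈ range (n + 1), n.choose w * f w := by
        simp only [sum_powerset_apply_card, card_univ, Fintype.card_fin, smul_eq_mul]

lemma NN_le_wt_sub_wt (ha : y ≤ a) (hb : y ≤ b) : NN a b ≤ wt b - wt y := by
  rw [← card_ones_sdiff_ones, ← card_ones, ← card_ones, ← card_sdiff_of_subset (ones.monotone hb)]
  exact card_le_card (sdiff_subset_sdiff Subset.rfl (ones.monotone ha))

lemma mem_ball : y ∈ ball a ↔ y ≤ a ∧ wt a - wt y ≤ 1 := by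
  simp [ball, Pi.le_def]

lemma IsZCode.eq_of_mem_ball {C : Finset (Fin n → Bool)} (hC : IsZCode C) (ha : a ∈ C) (hb : b ∈ C)
    (hya : y ∈ ball a) (hyb : y ∈ ball b) : a = b := by
  rw [mem_ball] at hya hyb
  by_contra hab
  have hfar : 2 ≤ max (NN a b) (NN b a) := hC a ha b hb hab
  have hNab := NN_le_wt_sub_wt hya.1 hyb.1
  have hNba := NN_le_wt_sub_wt hyb.1 hya.1
  omega

lemma exists_injOn_free {α : Type*} {S : Finset α} {C : Finset (Fin n → Bool)}
    (h : #S ≤ freeCount C) :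
    ∃ f : α → (Fin n → Bool), Set.InjOn f S ∧ ∀ m ∈ S, ∀ a ∈ C, f m ∉ ball a := by
  obtain ⟨f, hmaps, hinj⟩ := S.finite_toSet.exists_injOn_of_encard_le
    (t := (({y | ∀ a ∈ C, y ∉ ball a} : Finset (Fin n → Bool)) : Set (Fin n → Bool)))
    (by simpa only [Set.encard_coe_eq_coe_finsetCard, Nat.cast_le, freeCount] using h)
  exact ⟨f, hinj, fun m hm => (mem_filter.1 (hmaps hm)).2⟩

end Words

section Channel

variable {α : Type*} {n1 n2 : ℕ}

/-- `CanReceive c1 c2 m y1 y2`: when the message `m` is sent with the encoders `c1` and `c2`, at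
most one asymmetric error in total can produce the outputs `y1` and `y2`. Messages range over an
arbitrary type. -/
def CanReceive (c1 : α → Fin n1 → Bool) (c2 : α → (Fin n1 → Bool) → Fin n2 → Bool) (m : α)
    (y1 : Fin n1 → Bool) (y2 : Fin n2 → Bool) : Prop :=
  y1 ≤ c1 m ∧ y2 ≤ c2 m y1 ∧ (wt (c1 m) - wt y1) + (wt (c2 m y1) - wt y2) ≤ 1

variable {c1 : α → Fin n1 → Bool} {c2 : α → (Fin n1 → Bool) → Fin n2 → Bool}

lemma canReceive_iff {m : α} {y1 : Fin n1 → Bool} {y2 : Fin n2 → Bool} :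
    CanReceive c1 c2 m y1 y2 ↔
      c1 m = y1 ∧ y2 ∈ ball (c2 m y1) ∨ y1 ⋖ c1 m ∧ y2 = c2 m y1 := by
  rw [covBy_iff_le_and_wt_eq, mem_ball]
  constructor
  · rintro ⟨h1, h2, hwt⟩
    by_cases hw : wt (c1 m) ≤ wt y1
    · exact .inl ⟨(eq_of_le_of_wt_le h1 hw).symm, h2, by omega⟩
    · exact .inr ⟨⟨h1, by omega⟩, eq_of_le_of_wt_le h2 (by omega)⟩
  · rintro (⟨rfl, h2, hwt⟩ | ⟨⟨h1, hwt⟩, rfl⟩)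
    · exact ⟨le_rfl, h2, by omega⟩
    · exact ⟨h1, le_rfl, by omega⟩

lemma exists_twoStageSuccess_of_subsingleton [Fintype α] [Nonempty α]
    (h : ∀ y1 y2, {m | CanReceive c1 c2 m y1 y2}.Subsingleton) :
    ∃ c1 c2 dec, TwoStageSuccess n1 n2 (Fintype.card α) c1 c2 dec := by
  have hdec (y1 : Fin n1 → Bool) (y2 : Fin n2 → Bool) :
      ∃ m, ∀ m', CanReceive c1 c2 m' y1 y2 → m = m' := by
    by_cases hm : ∃ m, CanReceive c1 c2 m y1 y2
    · exact hm.imp fun m hm m' hm' => h y1 y2 hm hm'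
    · exact ⟨Classical.arbitrary α, fun m' hm' => (hm ⟨m', hm'⟩).elim⟩
  choose dec hdec using hdec
  let e := Fintype.equivFin α
  refine ⟨fun m => c1 (e.symm m), fun m => c2 (e.symm m), fun y1 y2 => e (dec y1 y2),
    fun m y1 y2 h1 h2 hwt => ?_⟩
  exact e.eq_symm_apply.1 (hdec y1 y2 (e.symm m) ⟨h1, h2, hwt⟩)

end Channel

section CodeFamily

variable {n1 n2 : ℕ} {C : (Fin n1 → Bool) → Finset (Fin n2 → Bool)}

/-- The second-stage encoder for messages `(z, c)` with `c ∈ C z`: send `c` if `z` has been received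
correctly, and the word `f y (z, c)` if an erroneous word `y` has been received. -/
def secondEncoder (f : (Fin n1 → Bool) → (Σ z, C z) → Fin n2 → Bool) (m : Σ z, C z)
    (y : Fin n1 → Bool) : Fin n2 → Bool :=
  if m.1 = y then m.2 else f y m

variable {f : (Fin n1 → Bool) → (Σ z, C z) → Fin n2 → Bool}

lemma canReceive_secondEncoder_iff {m : Σ z, C z} {y1 : Fin n1 → Bool} {y2 : Fin n2 → Bool} :
    CanReceive Sigma.fst (secondEncoder f) m y1 y2 ↔
      m.1 = y1 ∧ y2 ∈ ball (m.2 : Fin n2 → Bool) ∨ y1 ⋖ m.1 ∧ y2 = f y1 m := by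
  rw [canReceive_iff]
  refine or_congr (and_congr_right fun h => ?_) (and_congr_right fun h => ?_)
  · rw [secondEncoder, if_pos h]
  · rw [secondEncoder, if_neg h.lt.ne']

lemma subsingleton_canReceive_secondEncoder (hC : ∀ y, IsZCode (C y))
    (hinj : ∀ y, Set.InjOn (f y) {m | y ⋖ m.1})
    (hfree : ∀ y m, y ⋖ m.1 → ∀ a ∈ C y, f y m ∉ ball a)
    (y1 : Fin n1 → Bool) (y2 : Fin n2 → Bool) :
    {m | CanReceive Sigma.fst (secondEncoder f) m y1 y2}.Subsingleton := by
  rintro ⟨z, c⟩ h ⟨z', c'⟩ h'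
  rw [Set.mem_ofPred_eq, canReceive_secondEncoder_iff] at h h'
  rcases h with ⟨rfl, hball⟩ | ⟨hcov, rfl⟩ <;> rcases h' with ⟨hz, hball'⟩ | ⟨hcov', hy⟩
  · obtain rfl : z' = z := hz
    rw [Subtype.ext ((hC z').eq_of_mem_ball c.2 c'.2 hball hball')]
  · exact (hfree _ _ hcov' _ c.2 (hy ▸ hball)).elim
  · obtain rfl : z' = y1 := hz
    exact (hfree _ _ hcov _ c'.2 hball').elim
  · exact hinj y1 hcov hcov' hy

open scoped Classical in
theorem exists_twoStageSuccess_of_sum_covBy_le_freeCount (hC : ∀ y, IsZCode (C y))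
    (hfree : ∀ y, ∑ z with y ⋖ z, #(C z) ≤ freeCount (C y)) (hpos : 0 < ∑ y, #(C y)) :
    ∃ c1 c2 dec, TwoStageSuccess n1 n2 (∑ y, #(C y)) c1 c2 dec := by
  have hcard : Fintype.card (Σ z, C z) = ∑ y, #(C y) := by simp
  have : Nonempty (Σ z, C z) := Fintype.card_pos_iff.1 (hcard ▸ hpos)
  have hf (y : Fin n1 → Bool) : ∃ f : (Σ z, C z) → Fin n2 → Bool,
      Set.InjOn f {m | y ⋖ m.1} ∧ ∀ m, y ⋖ m.1 → ∀ a ∈ C y, f m ∉ ball a := by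
    have hS : #(({z | y ⋖ z} : Finset _).sigma fun z => (univ : Finset (C z))) ≤
        freeCount (C y) := by
      simpa using hfree y
    simpa [Set.InjOn] using exists_injOn_free hS
  choose f hinj hf using hf
  rw [← hcard]
  exact exists_twoStageSuccess_of_subsingleton (subsingleton_canReceive_secondEncoder hC hinj hf)

theorem exists_twoStageSuccess_of_weight {C : ℕ → Finset (Fin n2 → Bool)}
    (hC : ∀ w ≤ n1, IsZCode (C w))
    (hfree : ∀ w ≤ n1, (n1 - w) * #(C (w + 1)) ≤ freeCount (C w))
    (hpos : 0 < ∑ w ∈ range (n1 + 1), n1.choose w * #(C w)) :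
    ∃ c1 c2 dec,
      TwoStageSuccess n1 n2 (∑ w ∈ range (n1 + 1), n1.choose w * #(C w)) c1 c2 dec := by
  classical
  rw [← sum_apply_wt n1 fun w => #(C w)] at hpos ⊢
  refine exists_twoStageSuccess_of_sum_covBy_le_freeCount (fun y => hC _ (wt_le y)) (fun y => ?_)
    hpos
  calc ∑ z with y ⋖ z, #(C (wt z))
      = #{z | y ⋖ z} * #(C (wt y + 1)) := sum_const_nat fun z hz => by
        rw [(covBy_iff_le_and_wt_eq.1 (mem_filter.1 hz).2).2]
    _ = (n1 - wt y) * #(C (wt y + 1)) := by rw [card_filter_covBy]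
    _ ≤ freeCount (C (wt y)) := hfree _ (wt_le y)

end CodeFamily

section LengthFour

/-- The second-stage code of length 4 used when the received first-stage word has weight `w`: a
subcode of `{0000, 1100, 0011, 1111}`. Two, three and four codewords leave `12`, `9` and `4` free
points, exactly the `4 * 3` needed at `w = 2`, `3 * 3` at `w = 3` and `1 * 4` at `w = 5`. -/
def codeOfWeight (w : ℕ) : Finset (Fin 4 → Bool) :=
  if w ≤ 2 then {![false, false, false, false], ![true, true, false, false]}
  else if w ≤ 4 then
    {![false, false, false, false], ![true, true, false, false], ![false, false, true, true]}
  else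
    {![false, false, false, false], ![true, true, false, false], ![false, false, true, true],
      ![true, true, true, true]}

lemma isZCode_codeOfWeight (w : ℕ) : IsZCode (codeOfWeight w) := by
  unfold codeOfWeight IsZCode
  split_ifs <;> decide +kernel

lemma mul_card_codeOfWeight_succ_le_freeCount :
    ∀ w ≤ 6, (6 - w) * #(codeOfWeight (w + 1)) ≤ freeCount (codeOfWeight w) := by
  decide +kernel

lemma sum_choose_mul_card_codeOfWeight :
    ∑ w ∈ range 7, Nat.choose 6 w * #(codeOfWeight w) = 177 := by
  decide +kernel

end LengthFour

theorem two_stage_length_10_size_177 :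
    ∃ (n1 n2 : ℕ), 0 < n1 ∧ 0 < n2 ∧ n1 + n2 = 10 ∧
      ∃ (c1 : Fin 177 → (Fin n1 → Bool))
        (c2 : Fin 177 → (Fin n1 → Bool) → (Fin n2 → Bool))
        (dec : (Fin n1 → Bool) → (Fin n2 → Bool) → Fin 177),
        TwoStageSuccess n1 n2 177 c1 c2 dec := by
  refine ⟨6, 4, by norm_num, by norm_num, by norm_num, ?_⟩
  rw [← sum_choose_mul_card_codeOfWeight]
  exact exists_twoStageSuccess_of_weight (fun w _ => isZCode_codeOfWeight w)
    mul_card_codeOfWeight_succ_le_freeCount (by simp [sum_choose_mul_card_codeOfWeight])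
end

section
/- Every code C ⊆ {0,1}^9 with |C| = 62 and d_Z(a,b) ≥ 2 for all distinct a, b ∈ C has at most 177 free points. -/
/-!
Replace each codeword by its support, and let `A k` be the number of supports of size `k`.
The balls of a code are disjoint and `ball a` has `wt a + 1` points, so it suffices to show that 62
codewords of length 9 have total weight at least `273 = 512 - 62 - 177`.

Two supports of size at most `k + 1` cannot share a `k`-subset. Counting the supports above a given
set one added point at a time, this yields `A 0 + A 1 ≤ 1`, `2 * A 2 ≤ 9`, `2 * A 2 + 3 * A 3 ≤ 36`
and `A 4 ≤ 18`. Since `9 - 2` is odd, the supports of size 4 above a given pair cannot partition the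
remaining points; hence every support of size 2 extends to a triple lying in no support of size 4,
and counting triples gives `A 2 + A 3 + 4 * A 4 ≤ 84`. It follows that `A 2 + A 3 + A 4 ≤ 30`, and
by complementation the same bounds hold with `A (9 - k)` for `A k`. As `62 = 1 + 30 + 30 + 1`,
a code with 62 words attains these bounds, which leaves little freedom for its weights.
-/

section SetFamily

open Finset
open scoped FinsetFamily

variable {α : Type*}

theorem sum_card_eq_sum_mul_card_slice [Fintype α] (𝒜 : Finset (Finset α)) :
    ∑ S ∈ 𝒜, #S = ∑ k ∈ Iic (Fintype.card α), k * #(𝒜 # k) := by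
  classical
  conv_lhs =>
    rw [← biUnion_slice 𝒜, sum_biUnion (pairwiseDisjoint_slice.subset (Set.subset_univ _))]
  refine sum_congr rfl fun k _ => ?_
  rw [sum_const_nat fun S hS => (mem_slice.1 hS).2, mul_comm]

variable [DecidableEq α]

theorem card_slice_compls [Fintype α] (𝒜 : Finset (Finset α)) {j k : ℕ}
    (h : j + k = Fintype.card α) : #(𝒜ᶜˢ # j) = #(𝒜 # k) := by
  rw [slice, ← image_compl, filter_image, card_image_of_injective _ compl_injective, slice]
  congr 1
  refine filter_congr fun S _ => ?_
  have := S.card_le_univ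
  rw [card_compl]
  omega

theorem sum_compl_insert_le_mul [Fintype α] {P : Finset α} {k m : ℕ} (hP : #P = k)
    {f : Finset α → ℕ} (hf : ∀ Q, #Q = k + 1 → f Q ≤ m) :
    ∑ x ∈ Pᶜ, f (insert x P) ≤ (Fintype.card α - k) * m := by
  rw [← hP, ← card_compl]
  exact sum_le_card_nsmul _ _ _ fun x hx =>
    hf _ (by rw [card_insert_of_notMem (mem_compl.1 hx), hP])

/-- The members of `𝒜` of size `k` that contain `P`. -/
def sliceAbove (𝒜 : Finset (Finset α)) (P : Finset α) (k : ℕ) : Finset (Finset α) :=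
  {S ∈ 𝒜 # k | P ⊆ S}

theorem mem_sliceAbove {𝒜 : Finset (Finset α)} {P S : Finset α} {k : ℕ} :
    S ∈ sliceAbove 𝒜 P k ↔ (S ∈ 𝒜 ∧ #S = k) ∧ P ⊆ S := by
  rw [sliceAbove, mem_filter, mem_slice]

theorem sliceAbove_empty (𝒜 : Finset (Finset α)) (k : ℕ) : sliceAbove 𝒜 ∅ k = 𝒜 # k :=
  filter_true_of_mem fun _ _ => empty_subset _

theorem sum_card_sliceAbove_insert [Fintype α] (𝒜 : Finset (Finset α)) (P : Finset α) (k : ℕ) :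
    ∑ x ∈ Pᶜ, #(sliceAbove 𝒜 (insert x P) k) = (k - #P) * #(sliceAbove 𝒜 P k) := by
  have hbelow (x : α) :
      sliceAbove 𝒜 (insert x P) k = (sliceAbove 𝒜 P k).bipartiteBelow (fun S x => x ∈ S) x := by
    ext S
    simp only [mem_sliceAbove, mem_bipartiteBelow, insert_subset_iff]
    tauto
  have habove {S : Finset α} (hS : S ∈ sliceAbove 𝒜 P k) :
      #(Pᶜ.bipartiteAbove (fun S x => x ∈ S) S) = k - #P := by
    obtain ⟨⟨-, rfl⟩, hPS⟩ := mem_sliceAbove.1 hS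
    rw [← card_sdiff_of_subset hPS]
    congr 1
    ext x
    simp only [mem_bipartiteAbove, mem_compl, mem_sdiff, and_comm]
  simp only [hbelow]
  rw [← sum_card_bipartiteAbove_eq_sum_card_bipartiteBelow,
    sum_const_nat fun S hS => habove hS, mul_comm]

/-- The counterpart of `IsZCode` for set families: the supports of the words of such a code are
pairwise at Z-distance at least 2. -/
def IsZFamily (𝒜 : Finset (Finset α)) : Prop :=
  (𝒜 : Set (Finset α)).Pairwise fun S T => 2 ≤ max #(S \ T) #(T \ S)

namespace IsZFamily

variable {𝒜 : Finset (Finset α)} {P S T : Finset α} {k : ℕ}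

theorem eq_of_card_sdiff_le_one (h𝒜 : IsZFamily 𝒜) (hS : S ∈ 𝒜) (hT : T ∈ 𝒜)
    (hST : #(S \ T) ≤ 1) (hTS : #(T \ S) ≤ 1) : S = T :=
  h𝒜.eq hS hT (by omega)

theorem eq_of_common_subset (h𝒜 : IsZFamily 𝒜) (hS : S ∈ 𝒜) (hT : T ∈ 𝒜) (hPS : P ⊆ S)
    (hPT : P ⊆ T) (hcS : #S ≤ #P + 1) (hcT : #T ≤ #P + 1) : S = T := by
  refine h𝒜.eq_of_card_sdiff_le_one hS hT ?_ ?_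
  · grw [← hPT, card_sdiff_of_subset hPS]
    omega
  · grw [← hPS, card_sdiff_of_subset hPT]
    omega

theorem eq_of_common_superset (h𝒜 : IsZFamily 𝒜) (hS : S ∈ 𝒜) (hT : T ∈ 𝒜) (hSP : S ⊆ P)
    (hTP : T ⊆ P) (hcS : #P ≤ #S + 1) (hcT : #P ≤ #T + 1) : S = T := by
  refine h𝒜.eq_of_card_sdiff_le_one hS hT ?_ ?_
  · grw [hSP, card_sdiff_of_subset hTP]
    omega
  · grw [hTP, card_sdiff_of_subset hSP]
    omega

theorem card_shadow_slice (h𝒜 : IsZFamily 𝒜) (k : ℕ) : #(∂ (𝒜 # k)) = k * #(𝒜 # k) := by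
  have hdisj : (𝒜 # k : Set (Finset α)).PairwiseDisjoint fun S => S.image S.erase := by
    intro S hS T hT hne
    refine disjoint_left.2 fun P hPS hPT => hne ?_
    obtain ⟨hS, hcS⟩ := mem_slice.1 hS
    obtain ⟨hT, hcT⟩ := mem_slice.1 hT
    obtain ⟨x, hx, rfl⟩ := mem_image.1 hPS
    obtain ⟨y, -, hxy⟩ := mem_image.1 hPT
    have := card_erase_add_one hx
    exact h𝒜.eq_of_common_subset hS hT (erase_subset x S) (hxy ▸ erase_subset y T)
      (by omega) (by omega)
  rw [shadow, sup_eq_biUnion, card_biUnion hdisj, mul_comm]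
  refine sum_const_nat fun S hS => ?_
  rw [card_image_of_injOn S.erase_injOn, (mem_slice.1 hS).2]

theorem card_sliceAbove_add_card_sliceAbove_succ_le_one (h𝒜 : IsZFamily 𝒜) (hP : #P = k) :
    #(sliceAbove 𝒜 P k) + #(sliceAbove 𝒜 P (k + 1)) ≤ 1 := by
  have hdisj : Disjoint (sliceAbove 𝒜 P k) (sliceAbove 𝒜 P (k + 1)) := by
    refine disjoint_left.2 fun S hS hS' => ?_
    have := (mem_sliceAbove.1 hS).1.2
    have := (mem_sliceAbove.1 hS').1.2
    omega
  rw [← card_union_of_disjoint hdisj, card_le_one]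
  intro S hS T hT
  simp only [mem_union, mem_sliceAbove] at hS hT
  exact h𝒜.eq_of_common_subset (P := P) (by tauto) (by tauto) (by tauto) (by tauto)
    (by omega) (by omega)

theorem card_slice_zero_add_card_slice_one_le_one (h𝒜 : IsZFamily 𝒜) :
    #(𝒜 # 0) + #(𝒜 # 1) ≤ 1 := by
  simpa only [sliceAbove_empty] using
    h𝒜.card_sliceAbove_add_card_sliceAbove_succ_le_one card_empty

variable [Fintype α]

theorem compls (h𝒜 : IsZFamily 𝒜) : IsZFamily 𝒜ᶜˢ := by
  intro S hS T hT hne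
  have := h𝒜 (mem_compls.1 hS) (mem_compls.1 hT) (compl_injective.ne hne)
  simpa only [compl_sdiff_compl, max_comm] using this

theorem card_sliceAbove_add_two_mul_le (h𝒜 : IsZFamily 𝒜) (hP : #P = k) :
    #(sliceAbove 𝒜 P (k + 1)) + 2 * #(sliceAbove 𝒜 P (k + 2)) ≤ Fintype.card α - k := by
  have hsum := sum_compl_insert_le_mul hP fun _ hQ =>
    h𝒜.card_sliceAbove_add_card_sliceAbove_succ_le_one hQ
  simpa only [sum_add_distrib, sum_card_sliceAbove_insert, hP, add_assoc, Nat.reduceAdd,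
    Nat.add_sub_cancel_left, one_mul, mul_one] using hsum

theorem card_sliceAbove_add_card_sliceAbove_le_half (h𝒜 : IsZFamily 𝒜) (hP : #P = k) :
    #(sliceAbove 𝒜 P (k + 1)) + #(sliceAbove 𝒜 P (k + 2)) ≤ (Fintype.card α - k + 1) / 2 := by
  have hone := h𝒜.card_sliceAbove_add_card_sliceAbove_succ_le_one hP
  have htwo := h𝒜.card_sliceAbove_add_two_mul_le hP
  omega

theorem two_mul_add_three_mul_card_sliceAbove_le (h𝒜 : IsZFamily 𝒜) (hP : #P = k) :
    2 * #(sliceAbove 𝒜 P (k + 2)) + 3 * #(sliceAbove 𝒜 P (k + 3)) ≤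
      (Fintype.card α - k) * ((Fintype.card α - k) / 2) := by
  have hstep : ∀ Q, #Q = k + 1 →
      #(sliceAbove 𝒜 Q (k + 2)) + #(sliceAbove 𝒜 Q (k + 3)) ≤ (Fintype.card α - k) / 2 := by
    intro Q hQ
    have hcard : Fintype.card α - (k + 1) + 1 = Fintype.card α - k := by
      have := Q.card_le_univ
      omega
    exact hcard ▸ h𝒜.card_sliceAbove_add_card_sliceAbove_le_half hQ
  simpa only [sum_add_distrib, sum_card_sliceAbove_insert, hP, Nat.add_sub_cancel_left] using
    sum_compl_insert_le_mul hP hstep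

theorem three_mul_card_sliceAbove_le (h𝒜 : IsZFamily 𝒜) (hP : #P = k) :
    3 * #(sliceAbove 𝒜 P (k + 3)) ≤
      (Fintype.card α - k) * ((Fintype.card α - (k + 1)) / 2) := by
  have hstep : ∀ Q, #Q = k + 1 →
      #(sliceAbove 𝒜 Q (k + 3)) ≤ (Fintype.card α - (k + 1)) / 2 := by
    intro Q hQ
    have : _ + 2 * #(sliceAbove 𝒜 Q (k + 3)) ≤ _ := h𝒜.card_sliceAbove_add_two_mul_le hQ
    omega
  simpa only [sum_card_sliceAbove_insert, hP, Nat.add_sub_cancel_left] using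
    sum_compl_insert_le_mul hP hstep

theorem four_mul_card_sliceAbove_le (h𝒜 : IsZFamily 𝒜) (hP : #P = k) :
    4 * #(sliceAbove 𝒜 P (k + 4)) ≤ (Fintype.card α - k) *
      ((Fintype.card α - (k + 1)) * ((Fintype.card α - (k + 2)) / 2) / 3) := by
  have hstep : ∀ Q, #Q = k + 1 → #(sliceAbove 𝒜 Q (k + 4)) ≤
      (Fintype.card α - (k + 1)) * ((Fintype.card α - (k + 2)) / 2) / 3 := by
    intro Q hQ
    rw [Nat.le_div_iff_mul_le three_pos, mul_comm]
    exact h𝒜.three_mul_card_sliceAbove_le hQ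
  simpa only [sum_card_sliceAbove_insert, hP, Nat.add_sub_cancel_left] using
    sum_compl_insert_le_mul hP hstep

theorem exists_insert_notMem_shadow (h𝒜 : IsZFamily 𝒜) (hP : #P = k)
    (hodd : Odd (Fintype.card α - k)) : ∃ x ∉ P, insert x P ∉ ∂ (𝒜 # (k + 2)) := by
  by_contra! hcover
  have hone : ∀ x ∈ Pᶜ, #(sliceAbove 𝒜 (insert x P) (k + 2)) = 1 := by
    intro x hx
    have hxP : #(insert x P) = k + 1 := by rw [card_insert_of_notMem (mem_compl.1 hx), hP]
    obtain ⟨S, hS, hxPS⟩ := exists_subset_of_mem_shadow (hcover x (mem_compl.1 hx))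
    have hpos : 0 < #(sliceAbove 𝒜 (insert x P) (k + 2)) :=
      card_pos.2 ⟨S, mem_filter.2 ⟨hS, hxPS⟩⟩
    have hle : _ + #(sliceAbove 𝒜 (insert x P) (k + 2)) ≤ 1 :=
      h𝒜.card_sliceAbove_add_card_sliceAbove_succ_le_one hxP
    omega
  have hpartition : Fintype.card α - k = 2 * #(sliceAbove 𝒜 P (k + 2)) := by
    have := sum_card_sliceAbove_insert 𝒜 P (k + 2)
    rwa [sum_congr rfl hone, ← card_eq_sum_ones, card_compl, hP, Nat.add_sub_cancel_left] at this
  exact (Nat.not_odd_iff_even.2 ⟨_, hpartition.trans (two_mul _)⟩) hodd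

theorem exists_superset_notMem_shadow (h𝒜 : IsZFamily 𝒜) (hodd : Odd (Fintype.card α - k))
    (hS : S ∈ 𝒜 # k ∪ 𝒜 # (k + 1)) :
    ∃ T ∈ powersetCard (k + 1) univ \ ∂ (𝒜 # (k + 2)), S ⊆ T := by
  simp only [mem_sdiff, mem_powersetCard_univ]
  rcases mem_union.1 hS with hS | hS <;> obtain ⟨hS𝒜, hcS⟩ := mem_slice.1 hS
  · obtain ⟨x, hx, hxS⟩ := h𝒜.exists_insert_notMem_shadow hcS hodd
    exact ⟨insert x S, ⟨by rw [card_insert_of_notMem hx, hcS], hxS⟩, subset_insert x S⟩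
  · refine ⟨S, ⟨hcS, fun hshadow => ?_⟩, Subset.rfl⟩
    obtain ⟨T, hT, hST⟩ := exists_subset_of_mem_shadow hshadow
    obtain ⟨hT𝒜, hcT⟩ := mem_slice.1 hT
    obtain rfl := h𝒜.eq_of_common_subset hS𝒜 hT𝒜 Subset.rfl hST (by omega) (by omega)
    omega

theorem card_slice_add_card_slice_succ_add_le_choose (h𝒜 : IsZFamily 𝒜)
    (hodd : Odd (Fintype.card α - k)) :
    #(𝒜 # k) + #(𝒜 # (k + 1)) + (k + 2) * #(𝒜 # (k + 2)) ≤ (Fintype.card α).choose (k + 1) := by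
  have hshadow : ∂ (𝒜 # (k + 2)) ⊆ powersetCard (k + 1) univ :=
    sized_slice.shadow.subset_powersetCard_univ
  have hdisj : Disjoint (𝒜 # k) (𝒜 # (k + 1)) :=
    pairwiseDisjoint_slice (Set.mem_univ _) (Set.mem_univ _) k.lt_succ_self.ne
  have huncovered : #(𝒜 # k ∪ 𝒜 # (k + 1)) ≤ #(powersetCard (k + 1) univ \ ∂ (𝒜 # (k + 2))) := by
    refine card_le_card_of_forall_subsingleton (· ⊆ ·)
      (fun S hS => h𝒜.exists_superset_notMem_shadow hodd hS) ?_
    rintro U hU S ⟨hS, hSU⟩ T ⟨hT, hTU⟩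
    have hcU := mem_powersetCard_univ.1 (mem_sdiff.1 hU).1
    simp only [mem_union, mem_slice] at hS hT
    exact h𝒜.eq_of_common_superset (by tauto) (by tauto) hSU hTU (by omega) (by omega)
  rw [card_union_of_disjoint hdisj, card_sdiff_of_subset hshadow, h𝒜.card_shadow_slice,
    card_powersetCard, card_univ] at huncovered
  have := card_le_card hshadow
  rw [h𝒜.card_shadow_slice, card_powersetCard, card_univ] at this
  omega

theorem two_mul_card_slice_two_le (h𝒜 : IsZFamily 𝒜) : 2 * #(𝒜 # 2) ≤ Fintype.card α := by
  have h := h𝒜.card_sliceAbove_add_two_mul_le card_empty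
  simp only [sliceAbove_empty, zero_add, Nat.sub_zero] at h
  omega

theorem two_mul_card_slice_two_add_three_mul_card_slice_three_le (h𝒜 : IsZFamily 𝒜) :
    2 * #(𝒜 # 2) + 3 * #(𝒜 # 3) ≤ Fintype.card α * (Fintype.card α / 2) := by
  simpa only [sliceAbove_empty, zero_add, Nat.sub_zero] using
    h𝒜.two_mul_add_three_mul_card_sliceAbove_le card_empty

theorem four_mul_card_slice_four_le (h𝒜 : IsZFamily 𝒜) :
    4 * #(𝒜 # 4) ≤
      Fintype.card α * ((Fintype.card α - 1) * ((Fintype.card α - 2) / 2) / 3) := by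
  simpa only [sliceAbove_empty, zero_add, Nat.sub_zero] using
    h𝒜.four_mul_card_sliceAbove_le card_empty

theorem card_slice_four_le_of_card_eq_nine (h𝒜 : IsZFamily 𝒜) (hα : Fintype.card α = 9) :
    #(𝒜 # 4) ≤ 18 := by
  have := h𝒜.four_mul_card_slice_four_le
  rw [hα] at this
  omega

-- This bounds how far the total size of the members of size 2 to 4 falls short of 4 per member.
theorem two_mul_card_slice_two_add_card_slice_three_le_of_card_eq_nine (h𝒜 : IsZFamily 𝒜)
    (hα : Fintype.card α = 9) : 2 * #(𝒜 # 2) + #(𝒜 # 3) ≤ 17 := by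
  have htwo := h𝒜.two_mul_card_slice_two_le
  have hthree := h𝒜.two_mul_card_slice_two_add_three_mul_card_slice_three_le
  rw [hα] at htwo hthree
  omega

theorem card_slice_two_add_three_add_four_le_of_card_eq_nine (h𝒜 : IsZFamily 𝒜)
    (hα : Fintype.card α = 9) : #(𝒜 # 2) + #(𝒜 # 3) + #(𝒜 # 4) ≤ 30 := by
  have htwo := h𝒜.two_mul_card_slice_two_le
  have hthree := h𝒜.two_mul_card_slice_two_add_three_mul_card_slice_three_le
  have hfour := h𝒜.card_slice_four_le_of_card_eq_nine hα
  have htriples : #(𝒜 # 2) + #(𝒜 # 3) + 4 * #(𝒜 # 4) ≤ 84 := by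
    have := h𝒜.card_slice_add_card_slice_succ_add_le_choose (k := 2) (by rw [hα]; decide)
    rwa [hα] at this
  rw [hα] at htwo hthree
  obtain hlt | heq : #(𝒜 # 4) ≤ 17 ∨ #(𝒜 # 4) = 18 := by omega
  · have : #(𝒜 # 2) + #(𝒜 # 3) ≤ 13 := by omega
    omega
  · have : #(𝒜 # 2) + #(𝒜 # 3) ≤ 12 := by omega
    omega

theorem le_sum_card_of_card_eq_nine (h𝒜 : IsZFamily 𝒜) (hα : Fintype.card α = 9)
    (hcard : #𝒜 = 62) : 273 ≤ ∑ S ∈ 𝒜, #S := by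
  have hcompl {j : ℕ} (k : ℕ) (hjk : j + k = 9) : #(𝒜ᶜˢ # j) = #(𝒜 # k) :=
    card_slice_compls 𝒜 (hjk.trans hα.symm)
  have hbottom := h𝒜.card_slice_zero_add_card_slice_one_le_one
  have hlower := h𝒜.card_slice_two_add_three_add_four_le_of_card_eq_nine hα
  have hupper := h𝒜.compls.card_slice_two_add_three_add_four_le_of_card_eq_nine hα
  have htop := h𝒜.compls.card_slice_zero_add_card_slice_one_le_one
  have hdeficit := h𝒜.two_mul_card_slice_two_add_card_slice_three_le_of_card_eq_nine hα
  have hfive := h𝒜.compls.card_slice_four_le_of_card_eq_nine hα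
  rw [hcompl 7 rfl, hcompl 6 rfl, hcompl 5 rfl] at hupper
  rw [hcompl 9 rfl, hcompl 8 rfl] at htop
  rw [hcompl 5 rfl] at hfive
  rw [← sum_card_slice, hα, ← Nat.range_succ_eq_Iic] at hcard
  rw [sum_card_eq_sum_mul_card_slice, hα, ← Nat.range_succ_eq_Iic]
  simp only [sum_range_succ, sum_range_zero] at hcard ⊢
  have hlower_weight : 103 ≤ 2 * #(𝒜 # 2) + 3 * #(𝒜 # 3) + 4 * #(𝒜 # 4) := by omega
  have hupper_weight : 162 ≤ 5 * #(𝒜 # 5) + 6 * #(𝒜 # 6) + 7 * #(𝒜 # 7) := by omega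
  have htop_weight : 8 ≤ 8 * #(𝒜 # 8) + 9 * #(𝒜 # 9) := by omega
  omega

end IsZFamily

end SetFamily

section Words

open Finset

variable {n : ℕ}

/-- The correspondence between binary words and subsets of the set of positions, which sends a
word to its support. -/
def supportEquiv (n : ℕ) : (Fin n → Bool) ≃ Finset (Fin n) where
  toFun a := {i | a i = true}
  invFun S i := decide (i ∈ S)
  left_inv a := by simp
  right_inv S := by simp

theorem mem_supportEquiv {a : Fin n → Bool} {i : Fin n} : i ∈ supportEquiv n a ↔ a i = true := by
  simp [supportEquiv]

theorem card_supportEquiv (a : Fin n → Bool) : #(supportEquiv n a) = wt a := rfl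

theorem card_supportEquiv_sdiff (a b : Fin n → Bool) :
    #(supportEquiv n b \ supportEquiv n a) = NN a b := by
  rw [NN]
  congr 1
  ext i
  simp [mem_supportEquiv, and_comm]

theorem mem_ball_iff {a y : Fin n → Bool} :
    y ∈ ball a ↔ supportEquiv n y ⊆ supportEquiv n a ∧ wt a ≤ wt y + 1 := by
  simp only [ball, mem_filter_univ, subset_iff, mem_supportEquiv, Bool.le_iff_imp,
    Nat.sub_le_iff_le_add']

theorem map_supportEquiv_ball (a : Fin n → Bool) :
    (ball a).map (supportEquiv n).toEmbedding =
      insert (supportEquiv n a) ((supportEquiv n a).image (supportEquiv n a).erase) := by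
  ext T
  obtain ⟨y, rfl⟩ := (supportEquiv n).surjective T
  simp only [mem_map_equiv, Equiv.symm_apply_apply, mem_ball_iff, ← card_supportEquiv]
  generalize supportEquiv n y = T, supportEquiv n a = S
  rw [mem_insert, mem_image]
  constructor
  · rintro ⟨hTS, hcard⟩
    rcases eq_or_ssubset_of_subset hTS with rfl | hssub
    · exact .inl rfl
    · have hlt := card_lt_card hssub
      obtain ⟨i, hi, rfl⟩ := exists_eq_insert_iff.2 ⟨hTS, by omega⟩
      exact .inr ⟨i, mem_insert_self i T, erase_insert hi⟩
  · rintro (rfl | ⟨i, hi, rfl⟩)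
    · exact ⟨Subset.rfl, by omega⟩
    · exact ⟨erase_subset i S, (card_erase_add_one hi).ge⟩

theorem card_ball (a : Fin n → Bool) : #(ball a) = wt a + 1 := by
  rw [← card_map (supportEquiv n).toEmbedding, map_supportEquiv_ball, card_insert_of_notMem,
    card_image_of_injOn (erase_injOn _), card_supportEquiv]
  simp

namespace IsZCode

variable {C : Finset (Fin n → Bool)}

theorem isZFamily_map_supportEquiv (hC : IsZCode C) :
    IsZFamily (C.map (supportEquiv n).toEmbedding) := by
  rw [IsZFamily, coe_map]
  rintro _ ⟨a, ha, rfl⟩ _ ⟨b, hb, rfl⟩ hne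
  have hdist := hC a ha b hb (ne_of_apply_ne _ hne)
  rwa [dZ, max_comm, ← card_supportEquiv_sdiff, ← card_supportEquiv_sdiff] at hdist

theorem pairwiseDisjoint_ball (hC : IsZCode C) :
    (C : Set (Fin n → Bool)).PairwiseDisjoint ball := by
  intro a ha b hb hne
  refine disjoint_left.2 fun y hya hyb => hne ?_
  rw [mem_ball_iff] at hya hyb
  exact (supportEquiv n).injective <| hC.isZFamily_map_supportEquiv.eq_of_common_subset
    (mem_map_of_mem _ ha) (mem_map_of_mem _ hb) hya.1 hyb.1 hya.2 hyb.2

theorem freeCount_add_sum_wt_add_card (hC : IsZCode C) :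
    freeCount C + (∑ a ∈ C, wt a + #C) = 2 ^ n := by
  have hfree : freeCount C = #(C.biUnion ball)ᶜ := by
    rw [freeCount]
    congr 1
    ext y
    simp
  have hballs : #(C.biUnion ball) = ∑ a ∈ C, wt a + #C := by
    rw [card_biUnion hC.pairwiseDisjoint_ball, card_eq_sum_ones, ← sum_add_distrib]
    exact sum_congr rfl fun a _ => card_ball a
  rw [hfree, ← hballs, card_compl_add_card]
  simp

end IsZCode

end Words

theorem free_points_upper_bound_length_9 :
    ∀ C : Finset (Fin 9 → Bool), IsZCode C → C.card = 62 → freeCount C ≤ 177 := by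
  intro C hC hcard
  have hfree := hC.freeCount_add_sum_wt_add_card
  have hweight := hC.isZFamily_map_supportEquiv.le_sum_card_of_card_eq_nine (Fintype.card_fin 9)
    ((Finset.card_map _).trans hcard)
  simp only [Finset.sum_map, Equiv.coe_toEmbedding, card_supportEquiv] at hweight
  omega
end
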